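/- arXiv:1608.02406 — 2 statements merged into one kernel-verified Lean document; each statement's English description precedes it below -/
import Mathlib

section
/- In the manipulation construction, for every α : X → Bool the ballot J*_α is rational and Dist(J*_α, J⃗) = 7n + 3m + 2 + 3u. -/
/-!
Rationality: `J*_α` satisfies `Γ₀`. By construction `A` and `T` hold and all `z`, `y`, `y'` are
false; `Z` fails because `n / 3 > 0`, and `B` fails because `m > 0`. The only clause left to check is
`(¬Z ∧ T) → ⋀ w₁`, which holds since `J*_α` accepts every `w₁`-issue.

Distance: a Hamming distance is a sum of indicators over issues, which `sum_issue` splits by kind of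
issue. For each `i`, exactly one of `x_i`, `x'_i` is true in `J*_α`, while each `J_k` assigns both
the same value, so this pair contributes exactly `1` to every distance, whatever `α` is. This gives
`n + m + u` for `J₁` and `n + m + (n + 1) + n + u` for each of `J₂` and `J₃`.
-/

/-!
Constraint-based judgment aggregation: the manipulation construction.
Issues are modelled as an inductive type, ballots as functions `Issue n m → Bool`,
the integrity constraint as a predicate on ballots, and the formula ψ as a Boolean
function of the assignments to X and Y.
-/

namespace Manip

/-- The issues of the manipulation construction. -/
inductive Issue (n m : ℕ) : Type
  | x : Fin n → Issue n m
  | x' : Fin n → Issue n m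
  | z : Fin (n / 3) → Issue n m
  | y : Fin m → Issue n m
  | y' : Fin m → Issue n m
  | t : Fin m → Issue n m
  | w1 : Fin (n + 1) → Issue n m
  | w2 : Fin n → Issue n m
  | w3 : Fin n → Issue n m
  | u : Fin 3 → Fin (10 * n + 10 * m + 10) → Issue n m
  deriving DecidableEq, Fintype

variable {n m : ℕ}

/-- Hamming distance between two ballots: the number of issues on which they differ. -/
def hamming {I : Type*} [Fintype I] (r r' : I → Bool) : ℕ :=
  (Finset.univ.filter (fun i => r i ≠ r' i)).card

def bigA (r : Issue n m → Bool) : Prop := ∀ i, r (.x i) ≠ r (.x' i)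
def bigZ (r : Issue n m → Bool) : Prop := ∀ i, r (.z i) = true
def bigB (r : Issue n m → Bool) : Prop := ∀ j, r (.y j) ≠ r (.y' j)
def bigT (r : Issue n m → Bool) : Prop := ∀ j, r (.t j) = true
def bigW1 (r : Issue n m → Bool) : Prop := ∀ ℓ, r (.w1 ℓ) = true
def bigW2 (r : Issue n m → Bool) : Prop := ∀ ℓ, r (.w2 ℓ) = true
def bigW3 (r : Issue n m → Bool) : Prop := ∀ ℓ, r (.w3 ℓ) = true

/-- The part Γ₀ of the integrity constraint. -/
def gamma0 (psi : (Fin n → Bool) → (Fin m → Bool) → Bool) (r : Issue n m → Bool) : Prop :=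
  (bigA r ∨ bigZ r) ∧ (bigA r → ∀ i, r (.z i) = false) ∧
  Xor' (bigB r) (bigT r) ∧ (bigB r → ∀ j, r (.t j) = false) ∧
  (bigZ r → ∀ i, r (.x i) = false ∧ r (.x' i) = false) ∧
  (bigT r → ∀ j, r (.y j) = false ∧ r (.y' j) = false) ∧
  (bigZ r → bigT r) ∧
  ((bigZ r ∧ bigT r) → (bigW2 r ∨ bigW3 r)) ∧
  ((¬ bigZ r ∧ bigT r) → bigW1 r) ∧
  ((¬ bigZ r ∧ ¬ bigT r) →
    (psi (fun i => r (.x i)) (fun j => r (.y j)) = false ∧ (bigW2 r ∨ bigW3 r)))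

/-- A ballot is rational if it satisfies the integrity constraint
`Γ = Γ₀ ∨ ⋁_{i∈[3]} ⋀_{ℓ∈[u]} u_{i,ℓ}`. -/
def rational (psi : (Fin n → Bool) → (Fin m → Bool) → Bool) (r : Issue n m → Bool) : Prop :=
  gamma0 psi r ∨ ∃ i : Fin 3, ∀ ℓ, r (.u i ℓ) = true

/-- The first individual ballot J₁: true exactly on the w₁- and u₁-issues. -/
def Jone : Issue n m → Bool := fun i => match i with
  | .w1 _ => true
  | .u k _ => k == 0
  | _ => false

/-- The second individual ballot J₂: true exactly on the w₂- and u₂-issues. -/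
def Jtwo : Issue n m → Bool := fun i => match i with
  | .w2 _ => true
  | .u k _ => k == 1
  | _ => false

/-- The third individual ballot J₃: true exactly on the x-, x'-, w₃- and u₃-issues. -/
def Jthree : Issue n m → Bool := fun i => match i with
  | .x _ => true
  | .x' _ => true
  | .w3 _ => true
  | .u k _ => k == 2
  | _ => false

/-- Cumulative Hamming distance of a ballot to a profile of three ballots. -/
def dist3 (r p1 p2 p3 : Issue n m → Bool) : ℕ :=
  hamming r p1 + hamming r p2 + hamming r p3

/-- Cumulative Hamming distance to the profile J⃗ = (J₁, J₂, J₃). -/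
def DistP (r : Issue n m → Bool) : ℕ := dist3 r Jone Jtwo Jthree

/-- Membership in the set of Kemeny outcomes of the profile (p1, p2, p3):
a rational ballot minimizing the cumulative Hamming distance among rational ballots. -/
def kemenyMem (psi : (Fin n → Bool) → (Fin m → Bool) → Bool)
    (p1 p2 p3 r : Issue n m → Bool) : Prop :=
  rational psi r ∧ ∀ r', rational psi r' → dist3 r p1 p2 p3 ≤ dist3 r' p1 p2 p3


/-- The ballot J*_α: x_i ↦ α(x_i), x'_i ↦ ¬α(x_i), all t- and w₁-issues true,
every other issue false. -/
def Jalpha (α : Fin n → Bool) : Issue n m → Bool := fun i => match i with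
  | .x i' => α i'
  | .x' i' => !(α i')
  | .t _ => true
  | .w1 _ => true
  | _ => false

end Manip

namespace Manip

/-- The issues as a disjoint union of index types, one summand per kind of issue. -/
def issueEquiv (n m : ℕ) : Issue n m ≃
    Fin n ⊕ Fin n ⊕ Fin (n / 3) ⊕ Fin m ⊕ Fin m ⊕ Fin m ⊕ Fin (n + 1) ⊕ Fin n ⊕ Fin n ⊕
      (Fin 3 × Fin (10 * n + 10 * m + 10)) where
  toFun
    | .x i => .inl i
    | .x' i => .inr (.inl i)
    | .z i => .inr (.inr (.inl i))
    | .y i => .inr (.inr (.inr (.inl i)))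
    | .y' i => .inr (.inr (.inr (.inr (.inl i))))
    | .t i => .inr (.inr (.inr (.inr (.inr (.inl i)))))
    | .w1 i => .inr (.inr (.inr (.inr (.inr (.inr (.inl i))))))
    | .w2 i => .inr (.inr (.inr (.inr (.inr (.inr (.inr (.inl i)))))))
    | .w3 i => .inr (.inr (.inr (.inr (.inr (.inr (.inr (.inr (.inl i))))))))
    | .u k i => .inr (.inr (.inr (.inr (.inr (.inr (.inr (.inr (.inr (k, i)))))))))
  invFun
    | .inl i => .x i
    | .inr (.inl i) => .x' i
    | .inr (.inr (.inl i)) => .z i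
    | .inr (.inr (.inr (.inl i))) => .y i
    | .inr (.inr (.inr (.inr (.inl i)))) => .y' i
    | .inr (.inr (.inr (.inr (.inr (.inl i))))) => .t i
    | .inr (.inr (.inr (.inr (.inr (.inr (.inl i)))))) => .w1 i
    | .inr (.inr (.inr (.inr (.inr (.inr (.inr (.inl i))))))) => .w2 i
    | .inr (.inr (.inr (.inr (.inr (.inr (.inr (.inr (.inl i)))))))) => .w3 i
    | .inr (.inr (.inr (.inr (.inr (.inr (.inr (.inr (.inr (k, i))))))))) => .u k i
  left_inv a := by cases a <;> rfl
  right_inv a := by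
    rcases a with i | i | i | i | i | i | i | i | i | i <;> rfl

theorem sum_issue (f : Issue n m → ℕ) :
    ∑ a, f a = ∑ i, (f (.x i) + f (.x' i)) + ∑ i, f (.z i) + ∑ j, f (.y j) + ∑ j, f (.y' j) +
      ∑ j, f (.t j) + ∑ l, f (.w1 l) + ∑ l, f (.w2 l) + ∑ l, f (.w3 l) +
      ∑ k, ∑ l, f (.u k l) := by
  rw [← (issueEquiv n m).symm.sum_comp]
  simp only [Fintype.sum_sum_type, Fintype.sum_prod_type, Finset.sum_add_distrib, issueEquiv,
    Equiv.coe_fn_symm_mk]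
  ring

theorem hamming_eq_sum {I : Type*} [Fintype I] (r r' : I → Bool) :
    hamming r r' = ∑ i, if r i ≠ r' i then 1 else 0 :=
  Finset.card_filter _ _

theorem indicator_true_add_false (b : Bool) :
    ((if b = true then 1 else 0) + if b = false then 1 else 0) = 1 := by
  cases b <;> rfl

theorem indicator_false_add_true (b : Bool) :
    ((if b = false then 1 else 0) + if b = true then 1 else 0) = 1 := by
  cases b <;> rfl

theorem hamming_Jalpha_Jone (α : Fin n → Bool) :
    hamming (Jalpha α : Issue n m → Bool) Jone = n + m + (10 * n + 10 * m + 10) := by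
  rw [hamming_eq_sum, sum_issue]
  simp [Jalpha, Jone, indicator_true_add_false]

theorem hamming_Jalpha_Jtwo (α : Fin n → Bool) :
    hamming (Jalpha α : Issue n m → Bool) Jtwo =
      n + m + (n + 1) + n + (10 * n + 10 * m + 10) := by
  rw [hamming_eq_sum, sum_issue]
  simp [Jalpha, Jtwo, indicator_true_add_false]

theorem hamming_Jalpha_Jthree (α : Fin n → Bool) :
    hamming (Jalpha α : Issue n m → Bool) Jthree =
      n + m + (n + 1) + n + (10 * n + 10 * m + 10) := by
  rw [hamming_eq_sum, sum_issue]
  simp [Jalpha, Jthree, indicator_false_add_true]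

theorem gamma0_Jalpha (hn : 0 < n) (hdvd : 3 ∣ n) (hm : 0 < m)
    (psi : (Fin n → Bool) → (Fin m → Bool) → Bool) (α : Fin n → Bool) :
    gamma0 psi (Jalpha α : Issue n m → Bool) := by
  have hA : bigA (Jalpha α : Issue n m → Bool) := fun i => by simp [Jalpha]
  have hT : bigT (Jalpha α : Issue n m → Bool) := fun _ => rfl
  have hZ : ¬ bigZ (Jalpha α : Issue n m → Bool) := fun h =>
    Bool.false_ne_true (h ⟨0, Nat.div_pos (Nat.le_of_dvd hn hdvd) (by norm_num)⟩)
  have hB : ¬ bigB (Jalpha α : Issue n m → Bool) := fun h => h ⟨0, hm⟩ rfl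
  exact ⟨.inl hA, fun _ _ => rfl, .inr ⟨hT, hB⟩, fun h => absurd h hB, fun h => absurd h hZ,
    fun _ _ => ⟨rfl, rfl⟩, fun _ => hT, fun h => absurd h.1 hZ, fun _ _ => rfl,
    fun h => absurd hT h.2⟩

end Manip

open Manip in
/-- for every α : X → Bool, the ballot J*_α is rational and
Dist(J*_α, J⃗) = 7n + 3m + 2 + 3u. -/
theorem manip_Jalpha_rational_dist (n m : ℕ) (hn : 0 < n) (hdvd : 3 ∣ n) (hm : 0 < m)
    (psi : (Fin n → Bool) → (Fin m → Bool) → Bool) (α : Fin n → Bool) :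
    rational psi (Jalpha α : Issue n m → Bool) ∧
    DistP (Jalpha α : Issue n m → Bool) = 7 * n + 3 * m + 2 + 3 * (10 * n + 10 * m + 10) := by
  refine ⟨.inl (gamma0_Jalpha hn hdvd hm psi α), ?_⟩
  rw [DistP, dist3, hamming_Jalpha_Jone, hamming_Jalpha_Jtwo, hamming_Jalpha_Jthree]
  ring
end

section
/- In the bribery construction, for every α : X → Bool the ballot J*_α is rational and Dist(J*_α, (J*_α, J₂, J₃)) = 2n + 6m + 8 + 2u. -/
/-!
The ballot `J*_α` satisfies `A`, `T` and `C` and falsifies `Z` and `B` (as `n, m ≥ 1`), which makes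
every conjunct of `Γ₀` true whatever `ψ` is.

For the distance, `J*_α` and `J_k` are true on disjoint sets of issues, so they differ exactly on
the issues one of them accepts: one of `x_i, x'_i` for each `i`, all `t_j`, all `b_j`, and all
`u_{k,ℓ}`. This gives `n + m + (2m + 4) + u` for each of `J₂`, `J₃`, while `J*_α` is at distance
`0` from itself. The count is made by splitting a sum over all issues by kind of issue
(`Brib.sum_issue`).
-/

/-!
Constraint-based judgment aggregation: the bribery construction.
Issues are modelled as an inductive type, ballots as functions `Issue n m → Bool`,
the integrity constraint as a predicate on ballots, and the formula ψ as a Boolean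
function of the assignments to X and Y.
-/

namespace Brib

/-- The issues of the bribery construction. -/
inductive Issue (n m : ℕ) : Type
  | x : Fin n → Issue n m
  | x' : Fin n → Issue n m
  | z : Fin n → Issue n m
  | y : Fin m → Issue n m
  | y' : Fin m → Issue n m
  | t : Fin m → Issue n m
  | u : Fin 3 → Fin (10 * n + 10 * m + 10) → Issue n m
  | a : Issue n m
  | b : Fin (2 * m + 4) → Issue n m
  deriving DecidableEq, Fintype

variable {n m : ℕ}

/-- Hamming distance between two ballots: the number of issues on which they differ. -/
def hamming {I : Type*} [Fintype I] (r r' : I → Bool) : ℕ :=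
  (Finset.univ.filter (fun i => r i ≠ r' i)).card

/-- Weighted Hamming distance: the sum of the weights of the issues on which the
two ballots differ. -/
def whamming {I : Type*} [Fintype I] (w : I → ℕ) (r r' : I → Bool) : ℕ :=
  ∑ i ∈ Finset.univ.filter (fun i => r i ≠ r' i), w i

def bigA (r : Issue n m → Bool) : Prop := ∀ i, r (.x i) ≠ r (.x' i)
def bigZ (r : Issue n m → Bool) : Prop := ∀ i, r (.z i) = true
def bigB (r : Issue n m → Bool) : Prop := ∀ j, r (.y j) ≠ r (.y' j)
def bigT (r : Issue n m → Bool) : Prop := ∀ j, r (.t j) = true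
def bigC (r : Issue n m → Bool) : Prop := ∀ j, r (.b j) = true

/-- The part Γ₀ of the integrity constraint. -/
def gamma0 (psi : (Fin n → Bool) → (Fin m → Bool) → Bool) (r : Issue n m → Bool) : Prop :=
  (r .a = true ∨ bigC r) ∧ (r .a = true → ∀ j, r (.b j) = false) ∧
  (bigC r → r .a = false) ∧
  (bigA r ∨ bigZ r) ∧ (bigA r → ∀ i, r (.z i) = false) ∧
  Xor' (bigB r) (bigT r) ∧ (bigB r → ∀ j, r (.t j) = false) ∧
  (bigZ r → ∀ i, r (.x i) = false ∧ r (.x' i) = false) ∧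
  (bigT r → ∀ j, r (.y j) = false ∧ r (.y' j) = false) ∧
  (bigZ r → (r .a = true ∧ bigT r)) ∧
  ((bigA r ∧ bigB r) →
    (psi (fun i => r (.x i)) (fun j => r (.y j)) = false ∧ r .a = true)) ∧
  ((bigA r ∧ bigT r) → bigC r)

/-- A ballot is rational if it satisfies the integrity constraint
`Γ = Γ₀ ∨ ⋁_{i∈[3]} ⋀_{ℓ∈[u]} u_{i,ℓ}`. -/
def rational (psi : (Fin n → Bool) → (Fin m → Bool) → Bool) (r : Issue n m → Bool) : Prop :=
  gamma0 psi r ∨ ∃ i : Fin 3, ∀ ℓ, r (.u i ℓ) = true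

/-- The profile J⃗ = (J₁, J₂, J₃): the ballot J_{k+1} sets exactly the issues
u_{k+1,ℓ} to true. -/
def Jp (k : Fin 3) : Issue n m → Bool := fun i => match i with
  | .u k' _ => k' == k
  | _ => false

/-- The briber's desired ballot J₀: true exactly on the b- and u₁-issues. -/
def Jzero : Issue n m → Bool := fun i => match i with
  | .b _ => true
  | .u k _ => k == 0
  | _ => false

/-- The briber's weight function: weight 1 on each b-issue, weight 0 elsewhere. -/
def wt : Issue n m → ℕ := fun i => match i with
  | .b _ => 1
  | _ => 0

/-- Cumulative Hamming distance of a ballot to a profile of three ballots. -/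
def dist3 (r p1 p2 p3 : Issue n m → Bool) : ℕ :=
  hamming r p1 + hamming r p2 + hamming r p3

/-- Membership in the set of Kemeny outcomes of the profile (p1, p2, p3):
a rational ballot minimizing the cumulative Hamming distance among rational ballots. -/
def kemenyMem (psi : (Fin n → Bool) → (Fin m → Bool) → Bool)
    (p1 p2 p3 r : Issue n m → Bool) : Prop :=
  rational psi r ∧ ∀ r', rational psi r' → dist3 r p1 p2 p3 ≤ dist3 r' p1 p2 p3

/-- The ballot J*_α: x_i ↦ α(x_i), x'_i ↦ ¬α(x_i), all t- and b-issues true,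
every other issue false. -/
def Jalpha (α : Fin n → Bool) : Issue n m → Bool := fun i => match i with
  | .x i' => α i'
  | .x' i' => !(α i')
  | .t _ => true
  | .b _ => true
  | _ => false

end Brib

namespace Brib

/-- The issues as a disjoint union of the nine kinds of issue. -/
def issueEquiv (n m : ℕ) : Issue n m ≃
    Fin n ⊕ Fin n ⊕ Fin n ⊕ Fin m ⊕ Fin m ⊕ Fin m ⊕
      (Fin 3 × Fin (10 * n + 10 * m + 10)) ⊕ Unit ⊕ Fin (2 * m + 4) where
  toFun
    | .x i => .inl i
    | .x' i => .inr (.inl i)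
    | .z i => .inr (.inr (.inl i))
    | .y j => .inr (.inr (.inr (.inl j)))
    | .y' j => .inr (.inr (.inr (.inr (.inl j))))
    | .t j => .inr (.inr (.inr (.inr (.inr (.inl j)))))
    | .u k l => .inr (.inr (.inr (.inr (.inr (.inr (.inl (k, l)))))))
    | .a => .inr (.inr (.inr (.inr (.inr (.inr (.inr (.inl ())))))))
    | .b j => .inr (.inr (.inr (.inr (.inr (.inr (.inr (.inr j)))))))
  invFun
    | .inl i => .x i
    | .inr (.inl i) => .x' i
    | .inr (.inr (.inl i)) => .z i
    | .inr (.inr (.inr (.inl j))) => .y j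
    | .inr (.inr (.inr (.inr (.inl j)))) => .y' j
    | .inr (.inr (.inr (.inr (.inr (.inl j))))) => .t j
    | .inr (.inr (.inr (.inr (.inr (.inr (.inl (k, l))))))) => .u k l
    | .inr (.inr (.inr (.inr (.inr (.inr (.inr (.inl ()))))))) => .a
    | .inr (.inr (.inr (.inr (.inr (.inr (.inr (.inr j))))))) => .b j
  left_inv i := by cases i <;> rfl
  right_inv i := by rcases i with i | i | i | i | i | i | ⟨k, l⟩ | ⟨⟩ | i <;> rfl

lemma sum_issue {n m : ℕ} (f : Issue n m → ℕ) :
    ∑ i, f i = ∑ i, f (.x i) + (∑ i, f (.x' i) + (∑ i, f (.z i) + (∑ j, f (.y j) +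
      (∑ j, f (.y' j) + (∑ j, f (.t j) + (∑ k, ∑ l, f (.u k l) + (f .a + ∑ j, f (.b j)))))))) := by
  rw [← (issueEquiv n m).symm.sum_comp f]
  simp only [Fintype.sum_sum_type, Fintype.sum_prod_type, Finset.univ_unique, Finset.sum_singleton]
  rfl

lemma hamming_self {I : Type*} [Fintype I] (r : I → Bool) : hamming r r = 0 := by
  simp [hamming]

lemma hamming_Jalpha_Jp {n m : ℕ} (α : Fin n → Bool) (k : Fin 3) :
    hamming (Jalpha α : Issue n m → Bool) (Jp k)
      = n + m + (2 * m + 4) + (10 * n + 10 * m + 10) := by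
  -- Exactly one of `x_i`, `x'_i` is accepted, so together the two kinds contribute `n`.
  have hx : (∑ i, if α i = true then 1 else 0) + (∑ i, if α i = false then 1 else 0) = n := by
    rw [← Finset.sum_add_distrib]
    calc _ = ∑ _i : Fin n, 1 := Finset.sum_congr rfl fun i _ => by cases α i <;> rfl
      _ = n := by simp
  have hu : (∑ k' : Fin 3, ∑ _l : Fin (10 * n + 10 * m + 10), if k' = k then 1 else 0)
      = 10 * n + 10 * m + 10 := by
    rw [Finset.sum_comm]; simp
  rw [hamming, Finset.card_filter, sum_issue]
  simp [Jalpha, Jp] at hx hu ⊢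
  omega

lemma gamma0_Jalpha {n m : ℕ} (hn : 0 < n) (hm : 0 < m)
    (psi : (Fin n → Bool) → (Fin m → Bool) → Bool) (α : Fin n → Bool) :
    gamma0 psi (Jalpha α : Issue n m → Bool) := by
  have hA : bigA (Jalpha α : Issue n m → Bool) := fun i => by simp [Jalpha]
  have hZ : ¬ bigZ (Jalpha α : Issue n m → Bool) := fun h => Bool.false_ne_true (h ⟨0, hn⟩)
  have hB : ¬ bigB (Jalpha α : Issue n m → Bool) := fun h => h ⟨0, hm⟩ rfl
  have hT : bigT (Jalpha α : Issue n m → Bool) := fun _ => rfl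
  have hC : bigC (Jalpha α : Issue n m → Bool) := fun _ => rfl
  exact ⟨.inr hC, fun h => absurd h Bool.false_ne_true, fun _ => rfl, .inl hA, fun _ _ => rfl,
    .inr ⟨hT, hB⟩, fun h => absurd h hB, fun h => absurd h hZ, fun _ _ => ⟨rfl, rfl⟩,
    fun h => absurd h hZ, fun h => absurd h.2 hB, fun _ => hC⟩

end Brib

open Brib in
/-- for every α : X → Bool, the ballot J*_α is rational and has
cumulative Hamming distance 2n + 6m + 8 + 2u to the bribed profile (J*_α, J₂, J₃). -/
theorem brib_Jalpha_rational_dist (n m : ℕ) (hn : 0 < n) (hm : 0 < m)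
    (psi : (Fin n → Bool) → (Fin m → Bool) → Bool) (α : Fin n → Bool) :
    rational psi (Jalpha α : Issue n m → Bool) ∧
    dist3 (Jalpha α : Issue n m → Bool) (Jalpha α) (Jp 1) (Jp 2)
      = 2 * n + 6 * m + 8 + 2 * (10 * n + 10 * m + 10) := by
  refine ⟨.inl (gamma0_Jalpha hn hm psi α), ?_⟩
  rw [dist3, hamming_self, hamming_Jalpha_Jp, hamming_Jalpha_Jp]
  omega
end
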